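/- Let u_1, ..., u_m be column vectors in ℂ^d such that Σ_{i=1}^m u_i u_i* = I and ‖u_i‖² ≤ ε for all i. Let r ∈ ℕ and suppose t_1, ..., t_r > 0 satisfy Σ_{j=1}^r t_j = 1. Then there exists a partition of {1, ..., m} into r sets S_1, ..., S_r such that for each 1 ≤ j ≤ r, ‖Σ_{i ∈ S_j} u_i u_i*‖ ≤ t_j (1 + √(rε))². -/

import Mathlib

/-- The outer product `u u*` of a vector `u ∈ ℂ^d` with itself, as a `d × d` matrix. -/
noncomputable def outer {d : ℕ} (u : EuclideanSpace ℂ (Fin d)) :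
    Matrix (Fin d) (Fin d) ℂ :=
  Matrix.of fun i j => u i * starRingEnd ℂ (u j)

/-- The operator norm of a matrix, acting on Euclidean space. -/
noncomputable def opNorm {d : ℕ} (A : Matrix (Fin d) (Fin d) ℂ) : ℝ :=
  ‖Matrix.toEuclideanCLM (𝕜 := ℂ) A‖

/-!
This is the barrier argument of Marcus, Spielman and Srivastava. Put the vectors `(√(t j))⁻¹ • u i`,
`j = 1, …, r`, in `r` orthogonal copies of `ℂ ^ d` and choose one of them for each `i`, with
probabilities `t j`. The expectation of the sum of the chosen outer products is the identity, and
the expected squared norm of each chosen vector is `r ‖u i‖ ^ 2`. The expected characteristic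
polynomial arises from the real stable polynomial `det (∑ s, X s • A s)` by operators `1 - ∂ᵥ`,
each of which preserves stability and shifts the region above its roots by a controlled amount, so
its largest root is at most `(1 + √(r ε)) ^ 2`. The copies are then chosen one by one. On lines
with positive direction the quotients `∂ᵥ F / F` have nonnegative residues, so they decrease beyond
the roots of `F`, and among the polynomials `F - ∂ᵥ F` of the possible choices one is positive to
the right of a point if their mean is. Since `F` is affine in each variable, `1 - ∂ₛ` is finally
the shift by `-eₛ`.
-/

section Univariate

open Polynomial

theorem eval_derivative_div_eval_eq_zero_or_im_neg {G : ℂ[X]} {z : ℂ} (hz : G.eval z ≠ 0)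
    (hroots : ∀ r ∈ G.roots, r.im < z.im) :
    G.derivative.eval z / G.eval z = 0 ∨ (G.derivative.eval z / G.eval z).im < 0 := by
  rw [(IsAlgClosed.splits G).eval_derivative_div_eval_of_ne_zero hz]
  refine Multiset.sum_induction (fun w : ℂ => w = 0 ∨ w.im < 0) _ ?_ (Or.inl rfl) ?_
  · rintro a b (rfl | ha) (rfl | hb)
    · simp
    · simp [hb]
    · simp [ha]
    · exact Or.inr (by simpa using add_neg ha hb)
  · simp only [Multiset.mem_map, forall_exists_index, and_imp, forall_apply_eq_imp_iff₂]
    intro r hr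
    have him : 0 < (z - r).im := by simpa using hroots r hr
    have hne : z - r ≠ 0 := fun h => by simp [h] at him
    right
    rw [one_div, Complex.inv_im]
    exact div_neg_of_neg_of_pos (neg_neg_of_pos him) (Complex.normSq_pos.2 hne)

theorem splits_of_aeval_ne_zero_of_im_pos {b : ℝ[X]}
    (hb : ∀ z : ℂ, 0 < z.im → aeval z b ≠ 0) : b.Splits := by
  refine Splits.of_splits_map (algebraMap ℝ ℂ) (IsAlgClosed.splits _) fun z hz => ?_
  have hroot : aeval z b = 0 := by
    rw [← eval_map_algebraMap]
    exact isRoot_of_mem_roots hz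
  have him : z.im = 0 := by
    rcases lt_trichotomy z.im 0 with h | h | h
    · have hconj : aeval (starRingEnd ℂ z) b = 0 := by rw [aeval_conj, hroot, map_zero]
      exact absurd hconj (hb _ (by simpa using h))
    · exact h
    · exact absurd hroot (hb z h)
  exact ⟨z.re, Complex.ext (by simp) (by simp [him])⟩

theorem eval_pos_of_forall_isRoot_lt {b : ℝ[X]} (hb : b.Splits) (hlc : 0 < b.leadingCoeff) {x : ℝ}
    (hx : ∀ s, b.IsRoot s → s < x) : 0 < b.eval x := by
  rw [hb.eval_eq_prod_roots]
  refine mul_pos hlc (Multiset.prod_induction (0 < ·) _ (fun _ _ => mul_pos) one_pos ?_)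
  simp only [Multiset.mem_map, forall_exists_index, and_imp, forall_apply_eq_imp_iff₂]
  exact fun s hs => sub_pos.2 (hx s (isRoot_of_mem_roots hs))

theorem eval_div_eval_eq_sum_of_nodup_roots {K : Type*} [Field K] [DecidableEq K] {a b : K[X]}
    (hb : b.Splits) (hnodup : b.roots.Nodup) (hdeg : a.degree < b.degree) {x : K}
    (hx : b.eval x ≠ 0) :
    a.eval x / b.eval x =
      ∑ s ∈ b.roots.toFinset, a.eval s / b.derivative.eval s / (x - s) := by
  have hb0 : b ≠ 0 := fun h => hx (by simp [h])
  have hlc : b.leadingCoeff ≠ 0 := leadingCoeff_ne_zero.2 hb0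
  set S := b.roots.toFinset with hS
  have hnodal : b = C b.leadingCoeff * Lagrange.nodal S id := by
    conv_lhs => rw [hb.eq_prod_roots]
    rw [Lagrange.nodal_eq, Finset.prod, hS, Multiset.toFinset_val, hnodup.dedup]
    rfl
  have hcard : b.degree = S.card := by
    rw [hb.degree_eq_card_roots hb0, hS, Multiset.toFinset_card_of_nodup hnodup]
  have hxS : ∀ s ∈ S, x ≠ id s := by
    rintro s hs rfl
    exact hx (isRoot_of_mem_roots (Multiset.mem_toFinset.1 hs))
  have hevalb : b.eval x = b.leadingCoeff * (Lagrange.nodal S id).eval x := by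
    conv_lhs => rw [hnodal, eval_C_mul]
  have hderiv (s : K) :
      b.derivative.eval s = b.leadingCoeff * (Lagrange.nodal S id).derivative.eval s := by
    conv_lhs => rw [hnodal, derivative_C_mul, eval_C_mul]
  have hnodal_ne : (Lagrange.nodal S id).eval x ≠ 0 := right_ne_zero_of_mul (hevalb ▸ hx)
  rw [Lagrange.eq_interpolate (f := a) Function.injective_id.injOn (hcard ▸ hdeg),
    Lagrange.eval_interpolate_not_at_node _ hxS, ← Lagrange.eq_interpolate
    Function.injective_id.injOn (hcard ▸ hdeg), hevalb, mul_comm b.leadingCoeff,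
    mul_div_mul_left _ _ hnodal_ne, Finset.sum_div]
  refine Finset.sum_congr rfl fun s hs => ?_
  rw [Lagrange.nodalWeight_eq_eval_derivative_nodal hs, hderiv, id]
  field_simp

theorem exists_im_pos_pow_eq_exp {k : ℕ} {θ : ℝ} (hθ : 0 < θ) (hk : θ < k * Real.pi) :
    ∃ ω : ℂ, 0 < ω.im ∧ ω ^ k = Complex.exp (θ * Complex.I) := by
  have hk0 : (0 : ℝ) < k := pos_of_mul_pos_left (hθ.trans hk) Real.pi_pos.le
  refine ⟨Complex.exp ((θ / k : ℝ) * Complex.I), ?_, ?_⟩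
  · rw [Complex.exp_ofReal_mul_I_im]
    exact Real.sin_pos_of_pos_of_lt_pi (by positivity) ((div_lt_iff₀' hk0).2 hk)
  · rw [← Complex.exp_nat_mul]
    have : (k : ℂ) ≠ 0 := by exact_mod_cast hk0.ne'
    congr 1
    push_cast
    field_simp

-- The left side is the limit of `e ^ k * (a / ((X - r) ^ k * q)).im` at `r + e ω` as `e → 0`.
theorem eval_div_eval_mul_im_inv_pow_nonpos {a q : ℝ[X]} {r : ℝ} {k : ℕ} (hq : q.eval r ≠ 0)
    (him : ∀ z : ℂ, 0 < z.im → (aeval z a / aeval z ((X - C r) ^ k * q)).im ≤ 0)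
    {ω : ℂ} (hω : 0 < ω.im) : a.eval r / q.eval r * (ω ^ k)⁻¹.im ≤ 0 := by
  have hreal (p : ℝ[X]) : aeval (r : ℂ) p = ((p.eval r : ℝ) : ℂ) := by
    simpa using aeval_algebraMap_apply_eq_algebraMap_eval (A := ℂ) r p
  let f : ℝ → ℂ := fun e => aeval (r + e * ω) a / aeval (r + e * ω) q * (ω ^ k)⁻¹
  have hf0 : f 0 = (a.eval r / q.eval r : ℝ) * (ω ^ k)⁻¹ := by simp [f, hreal]
  have hline : Continuous fun e : ℝ => (r + e * ω : ℂ) := by fun_prop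
  have hcont : ContinuousAt f 0 := by
    refine ((a.continuous_aeval.comp hline).continuousAt.div
      (q.continuous_aeval.comp hline).continuousAt ?_).mul continuousAt_const
    simpa [hreal] using hq
  have hf_im : ∀ e : ℝ, 0 < e → (f e).im ≤ 0 := by
    intro e he
    have hfe : f e =
        ((e ^ k : ℝ) : ℂ) * (aeval (r + e * ω) a / aeval (r + e * ω) ((X - C r) ^ k * q)) := by
      have : (e : ℂ) ≠ 0 := by exact_mod_cast he.ne'
      simp only [f, map_mul, map_pow, map_sub, aeval_X, aeval_C, Complex.coe_algebraMap,
        add_sub_cancel_left, mul_pow, Complex.ofReal_pow]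
      field_simp
    rw [hfe, Complex.im_ofReal_mul]
    exact mul_nonpos_of_nonneg_of_nonpos (by positivity) (him _ (by simpa using mul_pos he hω))
  have hlim := (Complex.continuous_im.continuousAt.comp hcont).tendsto.mono_left
    (nhdsWithin_le_nhds (s := Set.Ioi 0))
  have := le_of_tendsto hlim (Filter.eventually_of_mem self_mem_nhdsWithin hf_im)
  rwa [Function.comp_apply, hf0, Complex.im_ofReal_mul] at this

theorem multiplicity_eq_one_and_residue_nonneg {a q : ℝ[X]} {r : ℝ} {k : ℕ} (hk : k ≠ 0)
    (ha : a.eval r ≠ 0) (hq : q.eval r ≠ 0)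
    (him : ∀ z : ℂ, 0 < z.im → (aeval z a / aeval z ((X - C r) ^ k * q)).im ≤ 0) :
    k = 1 ∧ 0 ≤ a.eval r / q.eval r := by
  have hsin {θ : ℝ} (hθ : 0 < θ) (hθk : θ < k * Real.pi) :
      0 ≤ a.eval r / q.eval r * Real.sin θ := by
    obtain ⟨ω, hω, hωk⟩ := exists_im_pos_pow_eq_exp hθ hθk
    have := eval_div_eval_mul_im_inv_pow_nonpos hq him hω
    rw [hωk, ← Complex.exp_neg, ← neg_mul, ← Complex.ofReal_neg, Complex.exp_ofReal_mul_I_im,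
      Real.sin_neg] at this
    linarith
  have hπ := Real.pi_pos
  have hk1 : (1 : ℝ) ≤ k := by exact_mod_cast Nat.one_le_iff_ne_zero.2 hk
  have hres : 0 ≤ a.eval r / q.eval r := by
    simpa using hsin (θ := Real.pi / 2) (by positivity) (by nlinarith)
  refine ⟨?_, hres⟩
  by_contra hne
  have hk2 : (2 : ℝ) ≤ k := by exact_mod_cast (by lia : 2 ≤ k)
  have hneg := hsin (θ := Real.pi / 2 + Real.pi) (by positivity) (by nlinarith)
  rw [Real.sin_add_pi, Real.sin_pi_div_two] at hneg
  exact div_ne_zero ha hq (le_antisymm (by linarith) hres)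

/-- `a / b` is a sum of simple fractions `c s / (x - s)` over real roots `s` of `b`, with
nonnegative residues `c s`. This is the form in which the barrier functions below are shown to be
decreasing and convex. The quotient is only constrained where `b` does not vanish. -/
def HasNonnegResidues (a b : ℝ[X]) : Prop :=
  ∃ (S : Finset ℝ) (c : ℝ → ℝ), (∀ s ∈ S, b.IsRoot s ∧ 0 ≤ c s) ∧
    ∀ x, b.eval x ≠ 0 → a.eval x / b.eval x = ∑ s ∈ S, c s / (x - s)

theorem HasNonnegResidues.mul_left {a b : ℝ[X]} (h : HasNonnegResidues a b) (g : ℝ[X]) :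
    HasNonnegResidues (g * a) (g * b) := by
  obtain ⟨S, c, hS, hsum⟩ := h
  refine ⟨S, c, fun s hs => ⟨root_mul_left_of_isRoot g (hS s hs).1, (hS s hs).2⟩, fun x hx => ?_⟩
  rw [eval_mul] at hx
  rw [eval_mul, eval_mul, mul_div_mul_left _ _ (left_ne_zero_of_mul hx),
    hsum x (right_ne_zero_of_mul hx)]

theorem HasNonnegResidues.of_isCoprime {a b : ℝ[X]} (hab : IsCoprime a b)
    (hdeg : a.degree < b.degree) (hb : ∀ z : ℂ, 0 < z.im → aeval z b ≠ 0)
    (him : ∀ z : ℂ, 0 < z.im → (aeval z a / aeval z b).im ≤ 0) : HasNonnegResidues a b := by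
  have hb0 : b ≠ 0 := ne_zero_of_degree_gt hdeg
  have hroot (r : ℝ) (hr : b.IsRoot r) :
      b.rootMultiplicity r = 1 ∧ 0 ≤ a.eval r / b.derivative.eval r := by
    obtain ⟨q, hbq, hq⟩ := exists_eq_pow_rootMultiplicity_mul_and_not_dvd b hb0 r
    have hk : b.rootMultiplicity r ≠ 0 := ((rootMultiplicity_pos hb0).2 hr).ne'
    have ha : a.eval r ≠ 0 := fun ha => by
      obtain ⟨u, v, huv⟩ := hab
      simpa [ha, hr.eq_zero] using congrArg (eval r) huv
    rw [hbq] at him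
    obtain ⟨hk1, hres⟩ :=
      multiplicity_eq_one_and_residue_nonneg hk ha (fun h => hq (dvd_iff_isRoot.2 h)) him
    refine ⟨hk1, ?_⟩
    have hderiv : b.derivative.eval r = q.eval r := by
      rw [hbq, hk1]
      simp
    rwa [hderiv]
  have hnodup : b.roots.Nodup := by
    refine Multiset.nodup_iff_count_le_one.2 fun r => ?_
    by_cases hr : r ∈ b.roots
    · rw [count_roots, (hroot r (isRoot_of_mem_roots hr)).1]
    · simp [hr]
  refine ⟨b.roots.toFinset, fun s => a.eval s / b.derivative.eval s, fun s hs => ?_, fun x hx =>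
    eval_div_eval_eq_sum_of_nodup_roots (splits_of_aeval_ne_zero_of_im_pos hb) hnodup hdeg hx⟩
  have hs' := isRoot_of_mem_roots (Multiset.mem_toFinset.1 hs)
  exact ⟨hs', (hroot s hs').2⟩

theorem HasNonnegResidues.of_im_nonpos {a b : ℝ[X]} (hdeg : a.degree < b.degree)
    (hb : ∀ z : ℂ, 0 < z.im → aeval z b ≠ 0)
    (him : ∀ z : ℂ, 0 < z.im → (aeval z a / aeval z b).im ≤ 0) : HasNonnegResidues a b := by
  have hb0 : b ≠ 0 := ne_zero_of_degree_gt hdeg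
  set g := gcd a b
  obtain ⟨a', ha'⟩ : g ∣ a := gcd_dvd_left a b
  obtain ⟨b', hb'⟩ : g ∣ b := gcd_dvd_right a b
  have hg : g ≠ 0 := left_ne_zero_of_mul (hb' ▸ hb0)
  have hcoprime : IsCoprime a' b' := by
    rw [EuclideanDomain.eq_div_of_mul_eq_right hg ha'.symm,
      EuclideanDomain.eq_div_of_mul_eq_right hg hb'.symm]
    exact isCoprime_div_gcd_div_gcd hb0
  rw [ha', hb']
  have hgz (z : ℂ) (hz : 0 < z.im) : aeval z g * aeval z b' ≠ 0 := by
    rw [← map_mul, ← hb']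
    exact hb z hz
  refine (HasNonnegResidues.of_isCoprime hcoprime ?_ (fun z hz => right_ne_zero_of_mul (hgz z hz))
    fun z hz => ?_).mul_left g
  · rw [ha', hb', degree_mul, degree_mul] at hdeg
    exact lt_of_add_lt_add_left hdeg
  · have := him z hz
    rwa [ha', hb', map_mul, map_mul, mul_div_mul_left _ _ (left_ne_zero_of_mul (hgz z hz))] at this

theorem antitoneOn_div_sub {c s : ℝ} (hc : 0 ≤ c) :
    AntitoneOn (fun x => c / (x - s)) (Set.Ioi s) := fun x hx y _ hxy => by
  have := sub_pos.2 (Set.mem_Ioi.1 hx)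
  dsimp only
  gcongr

theorem convexOn_div_sub {c s : ℝ} (hc : 0 ≤ c) :
    ConvexOn ℝ (Set.Ioi s) fun x => c / (x - s) := by
  have := ((convexOn_zpow (𝕜 := ℝ) (-1)).translate_left (-s)).smul hc
  simpa [Set.preimage, div_eq_mul_inv, Set.Ioi, sub_eq_add_neg, Function.comp_def] using this

namespace HasNonnegResidues

variable {a b : ℝ[X]} {B : ℝ}

theorem exists_eqOn_sum (h : HasNonnegResidues a b) (hB : ∀ x, B ≤ x → b.eval x ≠ 0) :
    ∃ (S : Finset ℝ) (c : ℝ → ℝ), (∀ s ∈ S, s < B ∧ 0 ≤ c s) ∧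
      Set.EqOn (fun x => ∑ s ∈ S, c s / (x - s)) (fun x => a.eval x / b.eval x) (Set.Ici B) := by
  obtain ⟨S, c, hS, hsum⟩ := h
  exact ⟨S, c, fun s hs => ⟨lt_of_not_ge fun hle => hB s hle (hS s hs).1, (hS s hs).2⟩,
    fun x hx => (hsum x (hB x hx)).symm⟩

theorem div_nonneg (h : HasNonnegResidues a b) (hB : ∀ x, B ≤ x → b.eval x ≠ 0) :
    0 ≤ a.eval B / b.eval B := by
  obtain ⟨S, c, hS, hsum⟩ := h.exists_eqOn_sum hB
  refine le_of_le_of_eq ?_ (hsum Set.self_mem_Ici)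
  exact Finset.sum_nonneg fun s hs => _root_.div_nonneg (hS s hs).2 (sub_nonneg.2 (hS s hs).1.le)

theorem antitoneOn (h : HasNonnegResidues a b) (hB : ∀ x, B ≤ x → b.eval x ≠ 0) :
    AntitoneOn (fun x => a.eval x / b.eval x) (Set.Ici B) := by
  obtain ⟨S, c, hS, hsum⟩ := h.exists_eqOn_sum hB
  refine AntitoneOn.congr (fun x hx y hy hxy => Finset.sum_le_sum fun s hs => ?_) hsum
  have hsub := Set.Ici_subset_Ioi.2 (hS s hs).1
  exact antitoneOn_div_sub (hS s hs).2 (hsub hx) (hsub hy) hxy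

theorem convexOn (h : HasNonnegResidues a b) (hB : ∀ x, B ≤ x → b.eval x ≠ 0) :
    ConvexOn ℝ (Set.Ici B) fun x => a.eval x / b.eval x := by
  obtain ⟨S, c, hS, hsum⟩ := h.exists_eqOn_sum hB
  refine ConvexOn.congr ?_ hsum
  simp only [← Finset.sum_apply _ S fun s x => c s / (x - s)]
  refine Finset.sum_induction _ (ConvexOn ℝ (Set.Ici B)) (fun _ _ => ConvexOn.add)
    (convexOn_const 0 (convex_Ici B)) fun s hs => ?_
  exact (convexOn_div_sub (hS s hs).2).subset (Set.Ici_subset_Ioi.2 (hS s hs).1) (convex_Ici B)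

theorem eval_nonneg (h : HasNonnegResidues a b) (hb : ∀ x, B < x → 0 < b.eval x) :
    0 ≤ a.eval B := by
  refine ge_of_tendsto (a.continuous.continuousAt.mono_left nhdsWithin_le_nhds)
    (Filter.eventually_of_mem (self_mem_nhdsWithin (s := Set.Ioi B)) fun x hx => ?_)
  have := h.div_nonneg (B := x) fun y hy => (hb y (hx.trans_le hy)).ne'
  simpa [(hb x hx).ne'] using mul_nonneg this (hb x hx).le

theorem exists_forall_eval_sub_pos {κ : Type*} [Fintype κ] {a : κ → ℝ[X]}
    (h : ∀ j, HasNonnegResidues (a j) b) (hsplits : b.Splits) (hlc : 0 < b.leadingCoeff)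
    {t : κ → ℝ} (ht : ∀ j, 0 ≤ t j) (htsum : ∑ j, t j = 1)
    (hpos : ∀ x, B ≤ x → 0 < b.eval x - ∑ j, t j * (a j).eval x) :
    ∃ j, ∀ x, B ≤ x → 0 < b.eval x - (a j).eval x := by
  have hroot (l : ℝ) (hl : b.IsRoot l) : l < B := by
    obtain ⟨m, hm, hmax⟩ := b.roots.toFinset.exists_max_image id
      ⟨l, by simpa using ⟨leadingCoeff_ne_zero.1 hlc.ne', hl⟩⟩
    simp only [Multiset.mem_toFinset, mem_roots (leadingCoeff_ne_zero.1 hlc.ne'), id] at hm hmax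
    refine (hmax l hl).trans_lt (lt_of_not_ge fun hBm => (hpos m hBm).not_ge ?_)
    have ha (j) : 0 ≤ (a j).eval m := (h j).eval_nonneg fun x hx =>
      eval_pos_of_forall_isRoot_lt hsplits hlc fun s hs => (hmax s hs).trans_lt hx
    rw [hm.eq_zero, zero_sub, neg_nonpos]
    exact Finset.sum_nonneg fun j _ => mul_nonneg (ht j) (ha j)
  have hb (x : ℝ) (hx : B ≤ x) : 0 < b.eval x :=
    eval_pos_of_forall_isRoot_lt hsplits hlc fun s hs => (hroot s hs).trans_le hx
  obtain ⟨j, hj⟩ : ∃ j, (a j).eval B < b.eval B := by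
    by_contra! hle
    have : b.eval B ≤ ∑ j, t j * (a j).eval B := calc
      b.eval B = ∑ j, t j * b.eval B := by rw [← Finset.sum_mul, htsum, one_mul]
      _ ≤ ∑ j, t j * (a j).eval B := by gcongr with j; exacts [ht j, hle j]
    exact (hpos B le_rfl).not_ge (sub_nonpos.2 this)
  refine ⟨j, fun x hx => sub_pos.2 ?_⟩
  have hanti := (h j).antitoneOn (fun y hy => (hb y hy).ne') Set.self_mem_Ici hx hx
  exact (div_lt_one (hb x hx)).1 (hanti.trans_lt ((div_lt_one (hb B le_rfl)).2 hj))

end HasNonnegResidues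

end Univariate

section Multivariate

open MvPolynomial

variable {σ R A : Type*} [CommRing R] [CommRing A] [Algebra R A]

/-- The derivative `∑ i, v i * ∂ / ∂ X i` of multivariate polynomials in the direction `v`, linear
in `v`. -/
noncomputable def dirDeriv :
    (σ → R) →ₗ[R] Derivation R (MvPolynomial σ R) (MvPolynomial σ R) :=
  (mkDerivationEquiv R).toLinearMap ∘ₗ (Algebra.linearMap R (MvPolynomial σ R)).compLeft σ

@[simp]
theorem dirDeriv_X (v : σ → R) (i : σ) : dirDeriv v (X i) = C (v i) :=
  mkDerivation_X R _ i

theorem dirDeriv_comm (v w : σ → R) (F : MvPolynomial σ R) :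
    dirDeriv v (dirDeriv w F) = dirDeriv w (dirDeriv v F) := by
  have hcomm : ⁅dirDeriv v, dirDeriv w⁆ = 0 := derivation_ext fun i => by
    simp [Derivation.commutator_apply]
  exact sub_eq_zero.1 ((Derivation.commutator_apply ..).symm.trans congr($hcomm F))

theorem dirDeriv_sum {κ : Type*} (s : Finset κ) (v : κ → σ → R) (F : MvPolynomial σ R) :
    dirDeriv (∑ j ∈ s, v j) F = ∑ j ∈ s, dirDeriv (v j) F := by
  rw [map_sum, ← Derivation.coeFnAddMonoidHom_apply, map_sum, Finset.sum_apply]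
  rfl

theorem isHomogeneous_dirDeriv_monomial (v : σ → R) (m : σ →₀ ℕ) (c : R) :
    (dirDeriv v (monomial m c)).IsHomogeneous (m.degree - 1) := by
  classical
  have hmonomial : dirDeriv v (monomial m c) =
      C c * ∑ i ∈ m.support, monomial (m - Finsupp.single i 1) (m i : R) * C (v i) := by
    rw [← smul_eq_C_mul]
    exact mkDerivation_monomial _ _ m c
  rw [hmonomial]
  refine (IsHomogeneous.sum _ _ _ fun i hi => ?_).C_mul c
  have hle : Finsupp.single i 1 ≤ m := Finsupp.single_le_iff.2
    (Nat.one_le_iff_ne_zero.2 (Finsupp.mem_support_iff.1 hi))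
  have hdeg : (m - Finsupp.single i 1).degree = m.degree - 1 := by
    conv_rhs => rw [← tsub_add_cancel_of_le hle, map_add, Finsupp.degree_single]
    simp
  exact (isHomogeneous_monomial _ hdeg).mul (isHomogeneous_C σ (v i))

theorem homogeneousComponent_dirDeriv (v : σ → R) (F : MvPolynomial σ R) (n : ℕ) :
    homogeneousComponent n (dirDeriv v F) = dirDeriv v (homogeneousComponent (n + 1) F) := by
  induction F using MvPolynomial.induction_on' with
  | monomial m c =>
    rw [homogeneousComponent_of_mem (isHomogeneous_dirDeriv_monomial v m c),
      homogeneousComponent_of_mem (isHomogeneous_monomial c rfl)]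
    rcases Nat.eq_zero_or_pos m.degree with h0 | hpos
    · obtain rfl := (Finsupp.degree_eq_zero_iff m).1 h0
      simp
    · simp only [apply_ite (dirDeriv v), map_zero, show n = m.degree - 1 ↔ n + 1 = m.degree by lia]
  | add p q hp hq => simp only [map_add, hp, hq]

theorem totalDegree_dirDeriv_le (v : σ → R) (F : MvPolynomial σ R) :
    (dirDeriv v F).totalDegree ≤ F.totalDegree := by
  conv_lhs => rw [F.as_sum, map_sum]
  refine totalDegree_finsetSum_le fun m hm => ?_
  exact (isHomogeneous_dirDeriv_monomial v m _).totalDegree_le.trans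
    ((Nat.sub_le _ _).trans (le_totalDegree hm))

/-- The restriction of a multivariate polynomial to the line `x ↦ P + x w`. -/
noncomputable def alongLine (P w : σ → A) : MvPolynomial σ R →ₐ[R] Polynomial A :=
  aeval fun i => Polynomial.C (P i) + Polynomial.C (w i) * Polynomial.X

theorem eval_alongLine (P w : σ → A) (F : MvPolynomial σ R) (x : A) :
    (alongLine P w F).eval x = aeval (P + x • w) F := by
  induction F using MvPolynomial.induction_on with
  | C c => simp [alongLine, Polynomial.algebraMap_apply]
  | add p q hp hq => simp only [map_add, Polynomial.eval_add, hp, hq]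
  | mul_X p i hp =>
    rw [map_mul, Polynomial.eval_mul, hp, map_mul]
    simp [alongLine, mul_comm x]

theorem aeval_alongLine {B : Type*} [CommRing B] [Algebra R B] [Algebra A B] [IsScalarTower R A B]
    (P w : σ → A) (F : MvPolynomial σ R) (x : B) :
    Polynomial.aeval x (alongLine P w F) =
      aeval (fun i => algebraMap A B (P i) + x * algebraMap A B (w i)) F := by
  induction F using MvPolynomial.induction_on with
  | C c => simp [alongLine, ← IsScalarTower.algebraMap_apply]
  | add p q hp hq => simp only [map_add, hp, hq]
  | mul_X p i hp =>
    rw [map_mul, map_mul, hp, map_mul]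
    simp [alongLine, mul_comm x]

theorem derivative_alongLine (P : σ → A) (v : σ → R) (F : MvPolynomial σ R) :
    Polynomial.derivative (alongLine P (algebraMap R A ∘ v) F) =
      alongLine P (algebraMap R A ∘ v) (dirDeriv v F) := by
  induction F using MvPolynomial.induction_on with
  | C c => simp [alongLine, Polynomial.algebraMap_apply]
  | add p q hp hq => simp only [map_add, hp, hq]
  | mul_X p i hp =>
    rw [map_mul, Polynomial.derivative_mul, hp, Derivation.leibniz, dirDeriv_X]
    simp only [alongLine, Function.comp_apply, aeval_X, Polynomial.derivative_C,
      Polynomial.derivative_mul, zero_mul, Polynomial.derivative_X,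
      mul_one, zero_add, smul_eq_mul, map_add, map_mul, algHom_C, Polynomial.algebraMap_apply]
    ring

theorem natDegree_alongLine_le (P w : σ → R) (F : MvPolynomial σ R) :
    (alongLine P w F).natDegree ≤ F.totalDegree := by
  refine (aeval_natDegree_le (n := 1) F le_rfl _ fun i => ?_).trans_eq (mul_one _)
  rw [add_comm]
  exact Polynomial.natDegree_linear_le

theorem coeff_alongLine_monomial (P w : σ → R) (m : σ →₀ ℕ) (c : R) :
    (alongLine P w (monomial m c)).coeff m.degree = eval w (monomial m c) := by
  have hlin (p : Polynomial R) (hp : p ∈ m.toMultiset.map fun i =>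
      Polynomial.C (P i) + Polynomial.C (w i) * Polynomial.X) : p.natDegree ≤ 1 := by
    obtain ⟨i, -, rfl⟩ := Multiset.mem_map.1 hp
    rw [add_comm]
    exact Polynomial.natDegree_linear_le
  have hprod {M : Type _} [CommMonoid M] (f : σ → M) :
      m.prod (fun i k => f i ^ k) = (m.toMultiset.map f).prod := by
    rw [Finsupp.toMultiset_map, Finsupp.prod_toMultiset,
      Finsupp.prod_mapDomain_index (by simp) (by simp [pow_add])]
  have hcard : m.toMultiset.card = m.degree := Finsupp.card_toMultiset m
  have hcoeff := Polynomial.coeff_multiset_prod_of_natDegree_le _ 1 hlin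
  rw [Multiset.map_map, Multiset.card_map, mul_one, hcard] at hcoeff
  rw [alongLine, aeval_monomial, eval_monomial, Polynomial.algebraMap_apply, hprod, hprod,
    Polynomial.coeff_C_mul, hcoeff]
  simp

theorem coeff_alongLine (P w : σ → R) {F : MvPolynomial σ R} {n : ℕ} (hF : F.totalDegree ≤ n) :
    (alongLine P w F).coeff n = eval w (homogeneousComponent n F) := by
  rw [homogeneousComponent_apply, map_sum, Finset.sum_filter]
  conv_lhs => rw [F.as_sum, map_sum, Polynomial.finsetSum_coeff]
  refine Finset.sum_congr rfl fun m hm => ?_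
  split_ifs with h
  · rw [← h, coeff_alongLine_monomial]
  · refine Polynomial.coeff_eq_zero_of_natDegree_lt ((natDegree_alongLine_le _ _ _).trans_lt ?_)
    exact (totalDegree_monomial_le m _).trans_lt
      (((le_totalDegree hm).trans hF).lt_of_ne h)

end Multivariate

section Barrier

open MvPolynomial Filter Topology

variable {σ : Type*} {n : ℕ} {F : MvPolynomial σ ℝ} {P Q v w : σ → ℝ} {δ : ℝ}

/-- Real stable polynomials of degree `n` whose form of degree `n` is positive on the open positive
orthant, so that their restrictions to lines with positive directions are real-rooted with positive
leading coefficient. The degree is a parameter because it is preserved by `1 - dirDeriv v`. -/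
structure PositiveStable (n : ℕ) (F : MvPolynomial σ ℝ) : Prop where
  aeval_ne_zero : ∀ z : σ → ℂ, (∀ i, 0 < (z i).im) → aeval z F ≠ 0
  totalDegree_le : F.totalDegree ≤ n
  leading_pos : ∀ w : σ → ℝ, (∀ i, 0 < w i) → 0 < eval w (homogeneousComponent n F)

theorem homogeneousComponent_dirDeriv_eq_zero (hF : F.totalDegree ≤ n) (v : σ → ℝ) :
    homogeneousComponent n (dirDeriv v F) = 0 := by
  rw [homogeneousComponent_dirDeriv, homogeneousComponent_eq_zero _ _ (Nat.lt_succ_of_le hF),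
    map_zero]

theorem im_add_mul_pos {z : ℂ} (hz : 0 < z.im) (hw : ∀ i, 0 < w i) (P : σ → ℝ) (i : σ) :
    0 < ((P i : ℂ) + z * (w i : ℂ)).im := by
  simpa using mul_pos hz (hw i)

namespace PositiveStable

theorem aeval_dirDeriv_div_eq_zero_or_im_neg (hF : PositiveStable n F) (hv : 0 ≤ v) {z : σ → ℂ}
    (hz : ∀ i, 0 < (z i).im) :
    aeval z (dirDeriv v F) / aeval z F = 0 ∨ (aeval z (dirDeriv v F) / aeval z F).im < 0 := by
  let G : Polynomial ℂ := alongLine z (algebraMap ℝ ℂ ∘ v) F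
  have hG : G.eval 0 = aeval z F := by simp [G, eval_alongLine]
  have hG' : G.derivative.eval 0 = aeval z (dirDeriv v F) := by
    rw [derivative_alongLine, eval_alongLine, zero_smul, add_zero]
  rw [← hG, ← hG']
  refine eval_derivative_div_eval_eq_zero_or_im_neg (hG ▸ hF.aeval_ne_zero z hz) fun r hr => ?_
  by_contra! hr0
  have hroot : G.eval r = 0 := Polynomial.isRoot_of_mem_roots hr
  rw [eval_alongLine] at hroot
  refine hF.aeval_ne_zero _ (fun i => ?_) hroot
  simpa using add_pos_of_pos_of_nonneg (hz i) (mul_nonneg hr0 (hv i))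

theorem sub_dirDeriv (hF : PositiveStable n F) (hv : 0 ≤ v) :
    PositiveStable n (F - dirDeriv v F) where
  aeval_ne_zero z hz h := by
    rw [map_sub, sub_eq_zero] at h
    have := hF.aeval_dirDeriv_div_eq_zero_or_im_neg hv hz
    rw [← h, div_self (hF.aeval_ne_zero z hz)] at this
    simp at this
  totalDegree_le := (totalDegree_sub _ _).trans
    (max_le hF.totalDegree_le ((totalDegree_dirDeriv_le v F).trans hF.totalDegree_le))
  leading_pos w hw := by
    rw [map_sub, homogeneousComponent_dirDeriv_eq_zero hF.totalDegree_le, sub_zero]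
    exact hF.leading_pos w hw

theorem aeval_alongLine_ne_zero (hF : PositiveStable n F) (hw : ∀ i, 0 < w i) (P : σ → ℝ) {z : ℂ}
    (hz : 0 < z.im) : Polynomial.aeval z (alongLine P w F) ≠ 0 := by
  rw [aeval_alongLine]
  exact hF.aeval_ne_zero _ (im_add_mul_pos hz hw P)

theorem splits_alongLine (hF : PositiveStable n F) (hw : ∀ i, 0 < w i) (P : σ → ℝ) :
    (alongLine P w F).Splits :=
  splits_of_aeval_ne_zero_of_im_pos fun _ => hF.aeval_alongLine_ne_zero hw P

theorem coeff_alongLine_pos (hF : PositiveStable n F) (hw : ∀ i, 0 < w i) (P : σ → ℝ) :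
    0 < (alongLine P w F).coeff n := by
  rw [coeff_alongLine P w hF.totalDegree_le]
  exact hF.leading_pos w hw

theorem natDegree_alongLine (hF : PositiveStable n F) (hw : ∀ i, 0 < w i) (P : σ → ℝ) :
    (alongLine P w F).natDegree = n :=
  Polynomial.natDegree_eq_of_le_of_coeff_ne_zero
    ((natDegree_alongLine_le P w F).trans hF.totalDegree_le) (hF.coeff_alongLine_pos hw P).ne'

theorem leadingCoeff_alongLine_pos (hF : PositiveStable n F) (hw : ∀ i, 0 < w i) (P : σ → ℝ) :
    0 < (alongLine P w F).leadingCoeff := by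
  rw [Polynomial.leadingCoeff, hF.natDegree_alongLine hw]
  exact hF.coeff_alongLine_pos hw P

theorem degree_alongLine_dirDeriv_lt (hF : PositiveStable n F) (hw : ∀ i, 0 < w i) (v P : σ → ℝ) :
    (alongLine P w (dirDeriv v F)).degree < (alongLine P w F).degree := by
  have hle := (totalDegree_dirDeriv_le v F).trans hF.totalDegree_le
  have hne : alongLine P w F ≠ 0 := fun h => by simpa [h] using hF.coeff_alongLine_pos hw P
  rw [Polynomial.degree_eq_natDegree hne, hF.natDegree_alongLine hw,
    Polynomial.degree_lt_iff_coeff_zero]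
  intro k hk
  rcases hk.eq_or_lt with rfl | hlt
  · rw [coeff_alongLine P w hle, homogeneousComponent_dirDeriv_eq_zero hF.totalDegree_le, map_zero]
  · exact Polynomial.coeff_eq_zero_of_natDegree_lt
      ((natDegree_alongLine_le P w _).trans_lt (hle.trans_lt hlt))

theorem hasNonnegResidues (hF : PositiveStable n F) (hw : ∀ i, 0 < w i) (hv : 0 ≤ v) (P : σ → ℝ) :
    HasNonnegResidues (alongLine P w (dirDeriv v F)) (alongLine P w F) := by
  refine .of_im_nonpos (hF.degree_alongLine_dirDeriv_lt hw v P)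
    (fun _ => hF.aeval_alongLine_ne_zero hw P) fun z hz => ?_
  rw [aeval_alongLine, aeval_alongLine]
  rcases hF.aeval_dirDeriv_div_eq_zero_or_im_neg hv (im_add_mul_pos hz hw P) with h | h
  · exact (congrArg Complex.im h).le
  · exact h.le

end PositiveStable

/-- `P` lies above the roots of `F`: the polynomial `F` is positive on `P + [0, ∞) ^ σ`. -/
def IsAboveRoots (F : MvPolynomial σ ℝ) (P : σ → ℝ) : Prop :=
  ∀ Q, P ≤ Q → 0 < eval Q F

/-- The barrier function of Marcus, Spielman and Srivastava: the derivative of `log F` in the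
direction `v`. It is used above the roots of `F` only. -/
noncomputable def barrier (F : MvPolynomial σ ℝ) (v P : σ → ℝ) : ℝ :=
  eval P (dirDeriv v F) / eval P F

/-- The derivative of `barrier F v` in the direction `w`. -/
noncomputable def barrierDeriv (F : MvPolynomial σ ℝ) (v w P : σ → ℝ) : ℝ :=
  (eval P (dirDeriv w (dirDeriv v F)) * eval P F - eval P (dirDeriv v F) * eval P (dirDeriv w F)) /
    eval P F ^ 2

theorem barrier_sum_smul {κ : Type*} [Fintype κ] (F : MvPolynomial σ ℝ) (t : κ → ℝ)
    (v : κ → σ → ℝ) (P : σ → ℝ) :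
    barrier F (∑ j, t j • v j) P = ∑ j, t j * barrier F (v j) P := by
  rw [barrier, dirDeriv_sum, map_sum, Finset.sum_div]
  exact Finset.sum_congr rfl fun j _ => by
    rw [map_smul, Derivation.smul_apply, smul_eval, mul_div_assoc, barrier]

theorem IsAboveRoots.mono (hP : IsAboveRoots F P) (hPQ : P ≤ Q) : IsAboveRoots F Q :=
  fun _ hQ => hP _ (hPQ.trans hQ)

theorem IsAboveRoots.eval_add_smul_pos (hP : IsAboveRoots F P) (hw : 0 ≤ w) {x : ℝ} (hx : 0 ≤ x) :
    0 < eval (P + x • w) F :=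
  hP _ (le_add_of_nonneg_right (smul_nonneg hx hw))

theorem eval_alongLine_real (F : MvPolynomial σ ℝ) (P w : σ → ℝ) (x : ℝ) :
    (alongLine P w F).eval x = eval (P + x • w) F := by
  rw [eval_alongLine, aeval_eq_eval]

theorem barrier_add_smul (F : MvPolynomial σ ℝ) (v P w : σ → ℝ) (x : ℝ) :
    barrier F v (P + x • w) = (alongLine P w (dirDeriv v F)).eval x / (alongLine P w F).eval x := by
  rw [eval_alongLine_real, eval_alongLine_real, barrier]

theorem hasDerivAt_barrier_add_smul (v : σ → ℝ) {x : ℝ} (hx : eval (P + x • w) F ≠ 0) :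
    HasDerivAt (fun y => barrier F v (P + y • w)) (barrierDeriv F v w (P + x • w)) x := by
  have hderiv (G : MvPolynomial σ ℝ) :
      (alongLine P w G).derivative = alongLine P w (dirDeriv w G) := derivative_alongLine P w G
  simp only [barrier_add_smul]
  refine (((alongLine P w (dirDeriv v F)).hasDerivAt x).div ((alongLine P w F).hasDerivAt x)
    (by rwa [eval_alongLine_real])).congr_deriv ?_
  simp only [hderiv, eval_alongLine_real, barrierDeriv]

theorem tendsto_barrier_add_smul (v : σ → ℝ) {x : ℝ} (hx : eval (P + x • w) F ≠ 0) :
    Tendsto (fun e : ℝ => barrier F v (P + x • (w + e • 1))) (𝓝[>] 0)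
      (𝓝 (barrier F v (P + x • w))) := by
  have hpath : Continuous fun e : ℝ => P + x • (w + e • (1 : σ → ℝ)) := by fun_prop
  have hcont : ContinuousAt (fun e : ℝ => barrier F v (P + x • (w + e • 1))) 0 :=
    ((continuous_eval _).comp hpath).continuousAt.div
      ((continuous_eval _).comp hpath).continuousAt (by simpa using hx)
  simpa using hcont.tendsto.mono_left (nhdsWithin_le_nhds (s := Set.Ioi 0))

theorem eventually_forall_pos_add_smul_one (hw : 0 ≤ w) :
    ∀ᶠ e : ℝ in 𝓝[>] 0, ∀ i, 0 < (w + e • (1 : σ → ℝ)) i := by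
  filter_upwards [self_mem_nhdsWithin] with e he i
  simpa using add_pos_of_nonneg_of_pos (hw i) he

namespace PositiveStable

-- The partial fractions need a strictly positive direction; the general case is a limit.
theorem antitoneOn_barrier (hF : PositiveStable n F) (hP : IsAboveRoots F P) (hv : 0 ≤ v)
    (hw : 0 ≤ w) : AntitoneOn (fun x : ℝ => barrier F v (P + x • w)) (Set.Ici 0) := by
  have hstrict {w : σ → ℝ} (hw : ∀ i, 0 < w i) :
      AntitoneOn (fun x : ℝ => barrier F v (P + x • w)) (Set.Ici 0) := by
    simp only [barrier_add_smul]
    exact (hF.hasNonnegResidues hw hv P).antitoneOn fun x hx => by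
      rw [eval_alongLine_real]
      exact (hP.eval_add_smul_pos (fun i => (hw i).le) hx).ne'
  intro x hx y hy hxy
  have hlim (x : ℝ) (hx : 0 ≤ x) :=
    tendsto_barrier_add_smul v (hP.eval_add_smul_pos hw hx).ne'
  refine le_of_tendsto_of_tendsto (hlim y hy) (hlim x hx) ?_
  filter_upwards [eventually_forall_pos_add_smul_one hw] with e he
  exact hstrict he hx hy hxy

theorem convexOn_barrier (hF : PositiveStable n F) (hP : IsAboveRoots F P) (hv : 0 ≤ v)
    (hw : 0 ≤ w) : ConvexOn ℝ (Set.Ici 0) fun x : ℝ => barrier F v (P + x • w) := by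
  have hstrict {w : σ → ℝ} (hw : ∀ i, 0 < w i) :
      ConvexOn ℝ (Set.Ici 0) fun x : ℝ => barrier F v (P + x • w) := by
    simp only [barrier_add_smul]
    exact (hF.hasNonnegResidues hw hv P).convexOn fun x hx => by
      rw [eval_alongLine_real]
      exact (hP.eval_add_smul_pos (fun i => (hw i).le) hx).ne'
  refine ⟨convex_Ici 0, fun x hx y hy a b ha hb hab => ?_⟩
  have hlim (x : ℝ) (hx : 0 ≤ x) :=
    tendsto_barrier_add_smul v (hP.eval_add_smul_pos hw hx).ne'
  refine le_of_tendsto_of_tendsto (hlim _ (convex_Ici 0 hx hy ha hb hab))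
    (((hlim x hx).const_smul a).add ((hlim y hy).const_smul b)) ?_
  filter_upwards [eventually_forall_pos_add_smul_one hw] with e he
  exact (hstrict he).2 hx hy ha hb hab

theorem barrier_le_of_le (hF : PositiveStable n F) (hP : IsAboveRoots F P) (hv : 0 ≤ v)
    (hPQ : P ≤ Q) : barrier F v Q ≤ barrier F v P := by
  simpa using hF.antitoneOn_barrier hP hv (sub_nonneg.2 hPQ) (Set.mem_Ici.2 le_rfl)
    (Set.mem_Ici.2 zero_le_one) zero_le_one

theorem barrierDeriv_nonpos (hF : PositiveStable n F) (hP : IsAboveRoots F P) (hv : 0 ≤ v)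
    (hw : 0 ≤ w) : barrierDeriv F v w P ≤ 0 := by
  have hderiv := hasDerivAt_barrier_add_smul (P := P) (w := w) v (x := 0)
    (hP.eval_add_smul_pos hw le_rfl).ne'
  have := (hF.antitoneOn_barrier hP hv hw).derivWithin_nonpos (x := 0)
  rwa [hderiv.hasDerivWithinAt.derivWithin (uniqueDiffOn_Ici 0 0 Set.self_mem_Ici), zero_smul,
    add_zero] at this

theorem barrier_add_smul_sub_le (hF : PositiveStable n F) (hP : IsAboveRoots F P) (hv : 0 ≤ v)
    (hw : 0 ≤ w) (hδ : 0 < δ) :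
    barrier F v (P + δ • w) - δ * barrierDeriv F v w (P + δ • w) ≤ barrier F v P := by
  have hslope := (hF.convexOn_barrier hP hv hw).slope_le_of_hasDerivAt Set.self_mem_Ici
    (Set.mem_Ici.2 hδ.le) hδ
    (hasDerivAt_barrier_add_smul v (hP.eval_add_smul_pos hw hδ.le).ne')
  rw [slope_def_field, sub_zero, div_le_iff₀' hδ, zero_smul, add_zero] at hslope
  linarith

theorem isAboveRoots_sub_dirDeriv (hF : PositiveStable n F) (hP : IsAboveRoots F P) (hv : 0 ≤ v)
    (hlt : barrier F v P < 1) : IsAboveRoots (F - dirDeriv v F) P := fun Q hPQ => by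
  rw [map_sub, sub_pos]
  exact (div_lt_one (hP Q hPQ)).1 ((hF.barrier_le_of_le hP hv hPQ).trans_lt hlt)

theorem isAboveRoots_sub_dirDeriv_add_smul (hF : PositiveStable n F) (hP : IsAboveRoots F P)
    (hv : 0 ≤ v) (hδ : 0 < δ) (hbarrier : barrier F v P ≤ 1 - 1 / δ) :
    IsAboveRoots (F - dirDeriv v F) (P + δ • v) :=
  (hF.isAboveRoots_sub_dirDeriv hP hv (hbarrier.trans_lt (by simpa))).mono
    (le_add_of_nonneg_right (smul_nonneg hδ.le hv))

end PositiveStable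

theorem barrier_sub_dirDeriv (hP : eval P F ≠ 0) (hv : barrier F v P ≠ 1) (w : σ → ℝ) :
    barrier (F - dirDeriv v F) w P =
      barrier F w P - barrierDeriv F w v P / (1 - barrier F v P) := by
  have h1 : 1 - barrier F v P = (eval P F - eval P (dirDeriv v F)) / eval P F := by
    rw [barrier, sub_div, div_self hP]
  have h2 : eval P F - eval P (dirDeriv v F) ≠ 0 := fun h =>
    sub_ne_zero.2 hv.symm (by rw [h1, h, zero_div])
  rw [h1, barrier, barrier, barrierDeriv, map_sub, map_sub, map_sub, dirDeriv_comm w v]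
  field_simp
  ring

theorem PositiveStable.barrier_sub_dirDeriv_le (hF : PositiveStable n F) (hP : IsAboveRoots F P)
    (hv : 0 ≤ v) (hδ : 0 < δ) (hbarrier : barrier F v P ≤ 1 - 1 / δ) (hw : 0 ≤ w) :
    barrier (F - dirDeriv v F) w (P + δ • v) ≤ barrier F w P := by
  have hle : P ≤ P + δ • v := le_add_of_nonneg_right (smul_nonneg hδ.le hv)
  have hinv : 1 / δ ≤ 1 - barrier F v (P + δ • v) := by
    linarith [hF.barrier_le_of_le hP hv hle]
  have hpos : 0 < 1 - barrier F v (P + δ • v) := (by positivity : 0 < 1 / δ).trans_le hinv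
  have hderiv := hF.barrierDeriv_nonpos (hP.mono hle) hw hv
  rw [barrier_sub_dirDeriv (hP _ hle).ne' (sub_pos.1 hpos).ne]
  calc barrier F w (P + δ • v) - barrierDeriv F w v (P + δ • v) / (1 - barrier F v (P + δ • v))
      ≤ barrier F w (P + δ • v) - δ * barrierDeriv F w v (P + δ • v) := by
        rw [sub_le_sub_iff_left, le_div_iff₀ hpos]
        have hδinv : 1 ≤ δ * (1 - barrier F v (P + δ • v)) := (div_le_iff₀' hδ).1 hinv
        nlinarith
    _ ≤ barrier F w P := hF.barrier_add_smul_sub_le hP hw hv hδ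

end Barrier

section MixedOperator

open MvPolynomial

variable {σ : Type*} {n : ℕ} {F : MvPolynomial σ ℝ} {P v : σ → ℝ} {l : List (σ → ℝ)} {δ : ℝ}

/-- The product of the operators `1 - dirDeriv v` over a list of directions, which turns the
determinant polynomial of a sum of matrices into a mixed characteristic polynomial. -/
noncomputable def mixedOperator (l : List (σ → ℝ)) : Module.End ℝ (MvPolynomial σ ℝ) :=
  (l.map fun v => 1 - (dirDeriv v : Module.End ℝ (MvPolynomial σ ℝ))).prod

theorem mixedOperator_nil (F : MvPolynomial σ ℝ) : mixedOperator [] F = F := rfl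

theorem mixedOperator_cons (v : σ → ℝ) (l : List (σ → ℝ)) (F : MvPolynomial σ ℝ) :
    mixedOperator (v :: l) F = mixedOperator l F - dirDeriv v (mixedOperator l F) := by
  simp [mixedOperator]

theorem dirDeriv_mixedOperator (v : σ → ℝ) (l : List (σ → ℝ)) (F : MvPolynomial σ ℝ) :
    dirDeriv v (mixedOperator l F) = mixedOperator l (dirDeriv v F) := by
  induction l with
  | nil => rfl
  | cons w l ih => rw [mixedOperator_cons, mixedOperator_cons, map_sub, dirDeriv_comm v w, ih]

theorem mixedOperator_sub_dirDeriv (v : σ → ℝ) (l : List (σ → ℝ)) (F : MvPolynomial σ ℝ) :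
    mixedOperator l (F - dirDeriv v F) = mixedOperator (v :: l) F := by
  rw [map_sub, mixedOperator_cons, dirDeriv_mixedOperator]

theorem eval_sub_dirDeriv (P : σ → ℝ) (hv : dirDeriv v (dirDeriv v F) = 0) :
    eval P (F - dirDeriv v F) = eval (P - v) F := by
  have hderiv (G : MvPolynomial σ ℝ) :
      (alongLine P v G).derivative = alongLine P v (dirDeriv v G) := derivative_alongLine P v G
  have hdeg : (alongLine P v F).natDegree ≤ 1 := by
    rw [← Nat.sub_eq_zero_iff_le, ← Polynomial.natDegree_derivative,
      ← Polynomial.derivative_eq_zero, hderiv, hderiv, hv, map_zero]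
  obtain ⟨a, b, hq⟩ := Polynomial.exists_eq_X_add_C_of_natDegree_le_one hdeg
  have h0 : eval P F = b := by
    simpa [hq] using (eval_alongLine_real F P v 0).symm
  have hneg : eval (P - v) F = -a + b := by
    simpa [← sub_eq_add_neg, hq] using (eval_alongLine_real F P v (-1)).symm
  have hderiv0 : eval P (dirDeriv v F) = a := by
    simpa [← hderiv, hq] using (eval_alongLine_real (dirDeriv v F) P v 0).symm
  rw [map_sub, h0, hneg, hderiv0]
  ring

theorem eval_mixedOperator (P : σ → ℝ) (hl : ∀ v ∈ l, dirDeriv v (dirDeriv v F) = 0) :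
    eval P (mixedOperator l F) = eval (P - l.sum) F := by
  induction l generalizing P with
  | nil => simp only [mixedOperator_nil, List.sum_nil, sub_zero]
  | cons v l ih =>
    have hv : dirDeriv v (dirDeriv v (mixedOperator l F)) = 0 := by
      rw [dirDeriv_mixedOperator, dirDeriv_mixedOperator, hl v List.mem_cons_self, map_zero]
    rw [mixedOperator_cons, eval_sub_dirDeriv P hv,
      ih _ fun w hw => hl w (List.mem_cons_of_mem v hw), List.sum_cons, sub_sub]

namespace PositiveStable

theorem apply_mixedOperator (hF : PositiveStable n F) (hl : ∀ v ∈ l, 0 ≤ v) :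
    PositiveStable n (mixedOperator l F) := by
  induction l with
  | nil => exact hF
  | cons v l ih =>
    rw [List.forall_mem_cons] at hl
    rw [mixedOperator_cons]
    exact (ih hl.2).sub_dirDeriv hl.1

theorem isAboveRoots_mixedOperator (hF : PositiveStable n F) (hP : IsAboveRoots F P) (hδ : 0 < δ)
    (hl : ∀ v ∈ l, 0 ≤ v) (hbarrier : ∀ v ∈ l, barrier F v P ≤ 1 - 1 / δ) :
    IsAboveRoots (mixedOperator l F) (P + δ • l.sum) := by
  suffices IsAboveRoots (mixedOperator l F) (P + δ • l.sum) ∧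
      ∀ w, 0 ≤ w → barrier (mixedOperator l F) w (P + δ • l.sum) ≤ barrier F w P from this.1
  induction l with
  | nil => simpa [mixedOperator_nil] using hP
  | cons v l ih =>
    rw [List.forall_mem_cons] at hl hbarrier
    obtain ⟨habove, hle⟩ := ih hl.2 hbarrier.2
    have hG := hF.apply_mixedOperator hl.2
    have hv := (hle v hl.1).trans hbarrier.1
    rw [mixedOperator_cons, List.sum_cons, add_comm v, smul_add, ← add_assoc]
    exact ⟨hG.isAboveRoots_sub_dirDeriv_add_smul habove hl.1 hδ hv, fun w hw =>
      (hG.barrier_sub_dirDeriv_le habove hl.1 hδ hv hw).trans (hle w hw)⟩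

theorem exists_forall_eval_sub_dirDeriv_pos {κ : Type*} [Fintype κ] {t : κ → ℝ} {w : κ → σ → ℝ}
    {p : σ → ℝ} (hF : PositiveStable n F) (hp : ∀ i, 0 < p i) (hw : ∀ j, 0 ≤ w j)
    (ht : ∀ j, 0 ≤ t j) (htsum : ∑ j, t j = 1)
    (hpos : ∀ x : ℝ, 0 ≤ x → 0 < eval (P + x • p) (F - dirDeriv (∑ j, t j • w j) F)) :
    ∃ j, ∀ x : ℝ, 0 ≤ x → 0 < eval (P + x • p) (F - dirDeriv (w j) F) := by
  simp only [map_sub, ← eval_alongLine_real] at hpos ⊢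
  refine HasNonnegResidues.exists_forall_eval_sub_pos
    (fun j => hF.hasNonnegResidues hp (hw j) P) (hF.splits_alongLine hp P)
    (hF.leadingCoeff_alongLine_pos hp P) ht htsum fun x hx => ?_
  have := hpos x hx
  rw [dirDeriv_sum] at this
  simpa only [map_sum, map_smul, Derivation.smul_apply, Polynomial.eval_finsetSum,
    Polynomial.eval_smul, smul_eq_mul] using this

theorem exists_forall_eval_mixedOperator_pos {ι κ : Type*} [Fintype κ] {t : ι → κ → ℝ}
    {w : ι → κ → σ → ℝ} {p : σ → ℝ} (hF : PositiveStable n F) (hp : ∀ i, 0 < p i)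
    (hw : ∀ i j, 0 ≤ w i j) (ht : ∀ i j, 0 ≤ t i j) (htsum : ∀ i, ∑ j, t i j = 1)
    {l : List ι} (hl : l.Nodup)
    (hpos : ∀ x : ℝ, 0 ≤ x →
      0 < eval (P + x • p) (mixedOperator (l.map fun i => ∑ j, t i j • w i j) F)) :
    ∃ c : ι → κ, ∀ x : ℝ, 0 ≤ x →
      0 < eval (P + x • p) (mixedOperator (l.map fun i => w i (c i)) F) := by
  classical
  induction l generalizing F with
  | nil =>
    have hκ (i : ι) : Nonempty κ := by
      by_contra hempty
      simpa [not_nonempty_iff.1 hempty] using htsum i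
    exact ⟨fun i => (hκ i).some, hpos⟩
  | cons i l ih =>
    obtain ⟨hi, hl⟩ := List.nodup_cons.1 hl
    have hG : PositiveStable n (mixedOperator (l.map fun i => ∑ j, t i j • w i j) F) :=
      hF.apply_mixedOperator <| List.forall_mem_map.2 fun i _ =>
        Finset.sum_nonneg fun j _ => smul_nonneg (ht i j) (hw i j)
    simp only [List.map_cons, mixedOperator_cons] at hpos
    obtain ⟨j, hj⟩ := hG.exists_forall_eval_sub_dirDeriv_pos hp (hw i) (ht i) (htsum i) hpos
    simp only [← mixedOperator_cons, ← mixedOperator_sub_dirDeriv] at hj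
    obtain ⟨c, hc⟩ := ih (hF.sub_dirDeriv (hw i j)) hl hj
    refine ⟨Function.update c i j, ?_⟩
    have hmap : (l.map fun k => w k (Function.update c i j k)) = l.map fun k => w k (c k) :=
      List.map_congr_left fun k hk => by rw [Function.update_of_ne (ne_of_mem_of_not_mem hk hi)]
    rwa [List.map_cons, hmap, Function.update_self, ← mixedOperator_sub_dirDeriv]

theorem exists_forall_eval_sub_sum_pos {ι κ : Type*} [Fintype ι] [Fintype κ] {t : ι → κ → ℝ}
    {w : ι → κ → σ → ℝ} {p : σ → ℝ} (hF : PositiveStable n F) (hP : IsAboveRoots F P)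
    (hw : ∀ i j, 0 ≤ w i j) (haffine : ∀ i j, dirDeriv (w i j) (dirDeriv (w i j) F) = 0)
    (ht : ∀ i j, 0 ≤ t i j) (htsum : ∀ i, ∑ j, t i j = 1) (hδ : 0 < δ)
    (hbarrier : ∀ i, barrier F (∑ j, t i j • w i j) P ≤ 1 - 1 / δ) (hp : ∀ k, 0 < p k) :
    ∃ c : ι → κ, ∀ x : ℝ, 0 ≤ x →
      0 < eval (P + δ • ∑ i, ∑ j, t i j • w i j + x • p - ∑ i, w i (c i)) F := by
  have hmean (i : ι) : 0 ≤ ∑ j, t i j • w i j :=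
    Finset.sum_nonneg fun j _ => smul_nonneg (ht i j) (hw i j)
  have habove := hF.isAboveRoots_mixedOperator (l := Finset.univ.toList.map fun i =>
    ∑ j, t i j • w i j) hP hδ (List.forall_mem_map.2 fun i _ => hmean i)
    (List.forall_mem_map.2 fun i _ => hbarrier i)
  rw [Finset.sum_map_toList] at habove
  obtain ⟨c, hc⟩ := hF.exists_forall_eval_mixedOperator_pos hp hw ht htsum
    (Finset.nodup_toList Finset.univ) fun x hx =>
      habove.eval_add_smul_pos (fun k => (hp k).le) hx
  refine ⟨c, fun x hx => ?_⟩
  have := hc x hx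
  rwa [eval_mixedOperator _ (List.forall_mem_map.2 fun i _ => haffine i (c i)),
    Finset.sum_map_toList] at this

end PositiveStable

end MixedOperator

section Determinant

open MvPolynomial Matrix
open scoped ComplexOrder

theorem posDef_sum_smul {σ N : Type*} [Fintype σ] [Finite N] {A : σ → Matrix N N ℂ} {p w : σ → ℝ}
    (hA : ∀ s, (A s).PosSemidef) (hp : (∑ s, p s • A s).PosDef) (hw : ∀ s, 0 < w s) :
    (∑ s, w s • A s).PosDef := by
  cases nonempty_fintype N
  have hpsd : (∑ s, w s • A s).PosSemidef := posSemidef_sum _ fun s _ => (hA s).smul (hw s).le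
  refine .of_dotProduct_mulVec_pos hpsd.isHermitian fun x hx =>
    (hpsd.dotProduct_mulVec_nonneg x).lt_of_ne' fun hzero => ?_
  have hquad (w : σ → ℝ) : star x ⬝ᵥ ((∑ s, w s • A s) *ᵥ x) =
      ∑ s, w s • (star x ⬝ᵥ (A s *ᵥ x)) := by
    simp only [sum_mulVec, smul_mulVec, dotProduct_sum, dotProduct_smul]
  have hnonneg (s : σ) : 0 ≤ star x ⬝ᵥ (A s *ᵥ x) := (hA s).dotProduct_mulVec_nonneg x
  rw [hquad, Finset.sum_eq_zero_iff_of_nonneg fun s _ => smul_nonneg (hw s).le (hnonneg s)] at hzero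
  refine (hp.dotProduct_mulVec_pos hx).ne' ?_
  rw [hquad]
  exact Finset.sum_eq_zero fun s hs => by
    rw [(smul_eq_zero_iff_right (hw s).ne').1 (hzero s hs), smul_zero]

variable {σ N : Type*} [Fintype N] [DecidableEq N]

theorem isHomogeneous_det {R : Type*} [CommRing R] {k : ℕ} {M : Matrix N N (MvPolynomial σ R)}
    (hM : ∀ i j, (M i j).IsHomogeneous k) : M.det.IsHomogeneous (Fintype.card N * k) := by
  rw [det_apply]
  refine IsHomogeneous.sum _ _ _ fun π _ => ?_
  have hprod : (∏ i, M (π i) i).IsHomogeneous (Fintype.card N * k) := by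
    simpa using IsHomogeneous.prod Finset.univ _ _ fun i _ => hM (π i) i
  exact (homogeneousSubmodule σ R _).smul_of_tower_mem _ hprod

theorem exists_map_ofRealHom_eq {G : MvPolynomial σ ℂ}
    (hG : ∀ x : σ → ℝ, (eval (fun i => (x i : ℂ)) G).im = 0) :
    ∃ F : MvPolynomial σ ℝ, map Complex.ofRealHom F = G := by
  have hconj : map (starRingEnd ℂ) G = G := by
    refine funext_set (fun _ => Set.range Complex.ofReal)
      (fun _ => Set.infinite_range_of_injective Complex.ofReal_injective) fun z hz => ?_
    choose x hx using fun i => hz i (Set.mem_univ i)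
    obtain rfl : (fun i => (x i : ℂ)) = z := funext hx
    calc eval (fun i => (x i : ℂ)) (map (starRingEnd ℂ) G)
        = starRingEnd ℂ (eval (fun i => (x i : ℂ)) G) := by
          rw [eval_map, ← eval₂_id, eval₂_comp_left, RingHom.comp_id]
          simp only [Function.comp_def, Complex.conj_ofReal]
      _ = eval (fun i => (x i : ℂ)) G := Complex.conj_eq_iff_im.2 (hG x)
  rw [← Set.mem_range, mem_range_map_iff_coeffs_subset]
  intro c hc
  obtain ⟨m, _, rfl⟩ := mem_coeffs_iff.1 hc
  have hreal := congrArg (coeff m) hconj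
  rw [coeff_map] at hreal
  exact (Complex.conj_eq_iff_real.1 hreal).imp fun _ => Eq.symm

variable [Fintype σ] {A : σ → Matrix N N ℂ} {F : MvPolynomial σ ℝ}

theorem exists_isHomogeneous_aeval_eq_det (hA : ∀ s, (A s).IsHermitian) :
    ∃ F : MvPolynomial σ ℝ, F.IsHomogeneous (Fintype.card N) ∧
      ∀ z : σ → ℂ, aeval z F = (∑ s, z s • A s).det := by
  let G : MvPolynomial σ ℂ := (∑ s, (X s : MvPolynomial σ ℂ) • (A s).map C).det
  have heval (z : σ → ℂ) : eval z G = (∑ s, z s • A s).det := by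
    rw [RingHom.map_det]
    congr 1
    ext i j
    simp [Matrix.sum_apply]
  have hhom : G.IsHomogeneous (Fintype.card N) := by
    rw [← mul_one (Fintype.card N)]
    refine isHomogeneous_det fun i j => ?_
    rw [Matrix.sum_apply]
    refine IsHomogeneous.sum _ _ _ fun s _ => ?_
    exact (isHomogeneous_X ℂ s).mul (isHomogeneous_C σ (A s i j))
  obtain ⟨F, hF⟩ := exists_map_ofRealHom_eq (G := G) fun x => by
    have hherm : (∑ s, (x s : ℂ) • A s)ᴴ = ∑ s, (x s : ℂ) • A s := by
      simp [conjTranspose_sum, (hA _).eq]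
    rw [heval, ← Complex.conj_eq_iff_im, starRingEnd_apply, ← det_conjTranspose, hherm]
  refine ⟨F, .of_map (f := Complex.ofRealHom) Complex.ofReal_injective (hF ▸ hhom), fun z => ?_⟩
  rw [← heval, ← hF, eval_map]
  rfl

theorem ofReal_eval_eq_det (hF : ∀ z : σ → ℂ, aeval z F = (∑ s, z s • A s).det) (w : σ → ℝ) :
    ((eval w F : ℝ) : ℂ) = (∑ s, w s • A s).det := by
  have := aeval_algebraMap_apply ℂ w F
  rw [aeval_eq_eval, hF] at this
  simpa using this.symm

theorem det_sum_smul_ne_zero {p : σ → ℝ} (hA : ∀ s, (A s).PosSemidef)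
    (hp : (∑ s, p s • A s).PosDef) {z : σ → ℂ} (hz : ∀ s, 0 < (z s).im) :
    (∑ s, z s • A s).det ≠ 0 := by
  intro hdet
  obtain ⟨x, hx, hMx⟩ := exists_mulVec_eq_zero_iff.2 hdet
  have hpos := (posDef_sum_smul hA hp hz).dotProduct_mulVec_pos hx
  refine (Complex.pos_iff.1 hpos).1.ne' ?_
  have hzero : (star x ⬝ᵥ ((∑ s, z s • A s) *ᵥ x)).im = 0 := by simp [hMx]
  rw [← hzero]
  simp only [sum_mulVec, smul_mulVec, dotProduct_sum, dotProduct_smul, Complex.re_sum,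
    Complex.im_sum]
  refine Finset.sum_congr rfl fun s _ => ?_
  have him := (Complex.nonneg_iff.1 ((hA s).dotProduct_mulVec_nonneg x)).2
  simp [Complex.mul_im, ← him]

theorem eval_pos_of_aeval_eq_det {p w : σ → ℝ} (hA : ∀ s, (A s).PosSemidef)
    (hp : (∑ s, p s • A s).PosDef) (hF : ∀ z : σ → ℂ, aeval z F = (∑ s, z s • A s).det)
    (hw : ∀ s, 0 < w s) : 0 < eval w F := by
  rw [← Complex.zero_lt_real, ofReal_eval_eq_det hF]
  exact (posDef_sum_smul hA hp hw).det_pos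

theorem positiveStable_of_aeval_eq_det {p : σ → ℝ} (hA : ∀ s, (A s).PosSemidef)
    (hp : (∑ s, p s • A s).PosDef) (hhom : F.IsHomogeneous (Fintype.card N))
    (hF : ∀ z : σ → ℂ, aeval z F = (∑ s, z s • A s).det) :
    PositiveStable (Fintype.card N) F where
  aeval_ne_zero z hz := hF z ▸ det_sum_smul_ne_zero hA hp hz
  totalDegree_le := hhom.totalDegree_le
  leading_pos w hw := by
    rw [homogeneousComponent_of_mem hhom, if_pos rfl]
    exact eval_pos_of_aeval_eq_det hA hp hF hw

end Determinant

section RankOne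

open MvPolynomial Matrix
open scoped ComplexOrder

theorem eval_dirDeriv_eq_of_affine {σ : Type*} {F : MvPolynomial σ ℝ} {P v : σ → ℝ} {b c : ℝ}
    (h : ∀ x : ℝ, eval (P + x • v) F = b + x * c) :
    eval P (dirDeriv v F) = c ∧ eval P (dirDeriv v (dirDeriv v F)) = 0 := by
  have hline : alongLine P v F = Polynomial.C b + Polynomial.X * Polynomial.C c :=
    Polynomial.funext fun x => by
      simp only [eval_alongLine_real, h, Polynomial.eval_add, Polynomial.eval_mul,
        Polynomial.eval_C, Polynomial.eval_X]
  have hderiv (G : MvPolynomial σ ℝ) :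
      alongLine P v (dirDeriv v G) = (alongLine P v G).derivative :=
    (derivative_alongLine P v G).symm
  have heval (G : MvPolynomial σ ℝ) : eval P G = (alongLine P v G).eval 0 := by
    simp [eval_alongLine_real]
  rw [heval, heval, hderiv, hderiv, hderiv, hline]
  simp

theorem det_add_smul_vecMulVec {R N : Type*} [CommRing R] [Fintype N] [DecidableEq N]
    {M : Matrix N N R} (hM : IsUnit M.det) (x : R) (a b : N → R) :
    (M + x • vecMulVec a b).det = M.det * (1 + x * (b ⬝ᵥ M⁻¹ *ᵥ a)) := by
  rw [← smul_vecMulVec, vecMulVec_eq Unit, det_add_replicateCol_mul_replicateRow hM,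
    det_unique (n := Unit), Matrix.mul_assoc, ← replicateCol_mulVec, Matrix.add_apply, one_apply_eq,
    replicateRow_mul_replicateCol_apply, mulVec_smul, dotProduct_smul, smul_eq_mul]

theorem star_dotProduct_self {N : Type*} [Fintype N] (a : N → ℂ) :
    star a ⬝ᵥ a = ((∑ k, ‖a k‖ ^ 2 : ℝ) : ℂ) := by
  simp [dotProduct, Complex.conj_mul']

variable {σ N : Type*} [Fintype σ] [DecidableEq σ] [Fintype N] [DecidableEq N]
  {a : σ → N → ℂ} {F : MvPolynomial σ ℝ} {p w : σ → ℝ}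

theorem eval_add_smul_single
    (hF : ∀ z : σ → ℂ, aeval z F = (∑ s, z s • vecMulVec (a s) (star (a s))).det)
    (hw : (∑ s, w s • vecMulVec (a s) (star (a s))).PosDef) (s : σ) (x : ℝ) :
    eval (w + x • Pi.single s 1) F = eval w F +
      x * (eval w F * (star (a s) ⬝ᵥ
        (∑ s, w s • vecMulVec (a s) (star (a s)))⁻¹ *ᵥ a s).re) := by
  let M := ∑ s, w s • vecMulVec (a s) (star (a s))
  have hsum : ∑ k, (w + x • Pi.single s 1 : σ → ℝ) k • vecMulVec (a k) (star (a k)) =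
      M + (x : ℂ) • vecMulVec (a s) (star (a s)) := by
    simp [M, add_smul, Finset.sum_add_distrib, Pi.single_apply]
  have hdet : ((eval (w + x • Pi.single s 1) F : ℝ) : ℂ) =
      (eval w F : ℂ) * (1 + x * (star (a s) ⬝ᵥ M⁻¹ *ᵥ a s)) := by
    rw [ofReal_eval_eq_det hF, ofReal_eval_eq_det hF, hsum,
      det_add_smul_vecMulVec ((isUnit_iff_isUnit_det _).1 hw.isUnit)]
  have hre := congrArg Complex.re hdet
  simp only [Complex.re_ofReal_mul, Complex.ofReal_re, Complex.add_re, Complex.one_re] at hre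
  rw [hre]
  ring

theorem dirDeriv_single_dirDeriv_single_eq_zero
    (hF : ∀ z : σ → ℂ, aeval z F = (∑ s, z s • vecMulVec (a s) (star (a s))).det)
    (hp : (∑ s, p s • vecMulVec (a s) (star (a s))).PosDef) (s : σ) :
    dirDeriv (Pi.single s 1) (dirDeriv (Pi.single s 1) F) = 0 := by
  refine funext_set (fun _ => Set.Ioi 0) (fun _ => Set.Ioi_infinite 0) fun w hw => ?_
  rw [map_zero]
  have hpos := posDef_sum_smul (fun s => posSemidef_vecMulVec_self_star (a s)) hp
    fun s => hw s (Set.mem_univ s)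
  exact (eval_dirDeriv_eq_of_affine (eval_add_smul_single hF hpos s)).2

theorem barrier_single_eq
    (hF : ∀ z : σ → ℂ, aeval z F = (∑ s, z s • vecMulVec (a s) (star (a s))).det)
    (hp : ∑ s, p s • vecMulVec (a s) (star (a s)) = 1) {τ : ℝ} (hτ : 0 < τ) (s : σ) :
    barrier F (Pi.single s 1) (τ • p) = (∑ k, ‖a s k‖ ^ 2) / τ := by
  have hM : ∑ s, (τ • p) s • vecMulVec (a s) (star (a s)) = τ • 1 := by
    simp only [Pi.smul_apply, smul_eq_mul, mul_smul, ← Finset.smul_sum, hp]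
  have hpos : (∑ s, (τ • p) s • vecMulVec (a s) (star (a s))).PosDef := hM ▸ PosDef.one.smul hτ
  have heval : eval (τ • p) F ≠ 0 := by
    rw [← Complex.ofReal_ne_zero, ofReal_eval_eq_det hF]
    exact hpos.det_pos.ne'
  have hinv : (τ • (1 : Matrix N N ℂ))⁻¹ = τ⁻¹ • 1 :=
    inv_eq_left_inv (by simp [hτ.ne'])
  rw [barrier, (eval_dirDeriv_eq_of_affine (eval_add_smul_single hF hpos s)).1, hM,
    mul_div_cancel_left₀ _ heval, hinv]
  rw [smul_mulVec, one_mulVec, dotProduct_smul, star_dotProduct_self, Complex.real_smul,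
    ← Complex.ofReal_mul, Complex.ofReal_re, inv_mul_eq_div]

end RankOne

section MarcusSpielmanSrivastava

open MvPolynomial Matrix
open scoped ComplexOrder

variable {ι κ N : Type*} [Fintype ι] [Fintype κ] [Fintype N] [DecidableEq N]

theorem posSemidef_smul_one_sub_of_det_ne_zero {A : Matrix N N ℂ} (hA : A.IsHermitian) {B : ℝ}
    (hdet : ∀ x : ℝ, B ≤ x → (x • 1 - A).det ≠ 0) : (B • 1 - A).PosSemidef := by
  have hherm : (B • 1 - A).IsHermitian := .sub (by simp [IsHermitian]) hA
  rw [hherm.posSemidef_iff_eigenvalues_nonneg]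
  intro i
  by_contra! hneg
  refine hdet (B - hherm.eigenvalues i) ((le_sub_self_iff B).2 hneg.le) ?_
  refine exists_mulVec_eq_zero_iff.1
    ⟨_, fun h => hherm.eigenvectorBasis.orthonormal.ne_zero i (by ext k; exact congrFun h k), ?_⟩
  rw [sub_smul, sub_right_comm, sub_mulVec, hherm.mulVec_eigenvectorBasis, smul_mulVec,
    one_mulVec, sub_self]

theorem sum_sum_smul_single [DecidableEq ι] [DecidableEq κ] (p : ι × κ → ℝ) :
    ∑ i, ∑ j, p (i, j) • (Pi.single (i, j) 1 : ι × κ → ℝ) = p := by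
  rw [← Fintype.sum_prod_type' fun i j => p (i, j) • (Pi.single (i, j) 1 : ι × κ → ℝ)]
  exact (pi_eq_sum_univ' p).symm

theorem ofReal_eval_smul_sub_sum_single [DecidableEq ι] [DecidableEq κ]
    {A : ι × κ → Matrix N N ℂ} {F : MvPolynomial (ι × κ) ℝ} {p : ι × κ → ℝ}
    (hF : ∀ z : ι × κ → ℂ, aeval z F = (∑ s, z s • A s).det) (hp : ∑ s, p s • A s = 1)
    (x : ℝ) (c : ι → κ) :
    ((eval (x • p - ∑ i, Pi.single (i, c i) 1) F : ℝ) : ℂ) = (x • 1 - ∑ i, A (i, c i)).det := by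
  rw [ofReal_eval_eq_det hF, ← Fintype.linearCombination_apply, map_sub, map_smul, map_sum,
    Fintype.linearCombination_apply, hp]
  simp only [Fintype.linearCombination_apply_single, one_smul]

variable {p : ι × κ → ℝ} {a : ι × κ → N → ℂ}

theorem barrier_sum_smul_single_le [DecidableEq ι] [DecidableEq κ] {F : MvPolynomial (ι × κ) ℝ}
    (hF : ∀ z : ι × κ → ℂ, aeval z F = (∑ s, z s • vecMulVec (a s) (star (a s))).det)
    (hp : ∑ s, p s • vecMulVec (a s) (star (a s)) = 1) {q : ℝ} (hq : 0 < q) {i : ι}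
    (hnorm : ∑ j, p (i, j) * ∑ k, ‖a (i, j) k‖ ^ 2 ≤ q ^ 2) :
    barrier F (∑ j, p (i, j) • Pi.single (i, j) 1) ((q + q ^ 2) • p) ≤ 1 - 1 / (1 + q) := by
  have hτ : 0 < q + q ^ 2 := by positivity
  calc barrier F (∑ j, p (i, j) • Pi.single (i, j) 1) ((q + q ^ 2) • p)
      = (∑ j, p (i, j) * ∑ k, ‖a (i, j) k‖ ^ 2) / (q + q ^ 2) := by
        rw [barrier_sum_smul, Finset.sum_div]
        exact Finset.sum_congr rfl fun j _ => by rw [barrier_single_eq hF hp hτ, mul_div_assoc]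
    _ ≤ q ^ 2 / (q + q ^ 2) := by gcongr
    _ = 1 - 1 / (1 + q) := by field_simp; ring

theorem exists_forall_det_sub_sum_ne_zero {q : ℝ} (hq : 0 < q) (hp : ∀ s, 0 < p s)
    (hpsum : ∀ i, ∑ j, p (i, j) = 1) (hsum : ∑ s, p s • vecMulVec (a s) (star (a s)) = 1)
    (hnorm : ∀ i, ∑ j, p (i, j) * ∑ k, ‖a (i, j) k‖ ^ 2 ≤ q ^ 2) :
    ∃ c : ι → κ, ∀ x : ℝ, (1 + q) ^ 2 ≤ x →
      (x • 1 - ∑ i, vecMulVec (a (i, c i)) (star (a (i, c i)))).det ≠ 0 := by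
  classical
  have hA (s : ι × κ) : (vecMulVec (a s) (star (a s))).PosSemidef :=
    posSemidef_vecMulVec_self_star _
  have hpos : (∑ s, p s • vecMulVec (a s) (star (a s))).PosDef := hsum ▸ PosDef.one
  obtain ⟨F, hhom, hF⟩ := exists_isHomogeneous_aeval_eq_det fun s => (hA s).isHermitian
  have habove : IsAboveRoots F ((q + q ^ 2) • p) := fun Q hQ =>
    eval_pos_of_aeval_eq_det hA hpos hF fun s => lt_of_lt_of_le
      (mul_pos (by positivity) (hp s)) (hQ s)
  obtain ⟨c, hc⟩ := (positiveStable_of_aeval_eq_det hA hpos hhom hF).exists_forall_eval_sub_sum_pos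
    habove (w := fun i j => Pi.single (i, j) 1) (fun i j => Pi.single_nonneg.2 zero_le_one)
    (fun i j => dirDeriv_single_dirDeriv_single_eq_zero hF hpos (i, j)) (fun i j => (hp (i, j)).le)
    hpsum (by positivity : 0 < 1 + q) (fun i => barrier_sum_smul_single_le hF hsum hq (hnorm i)) hp
  refine ⟨c, fun x hx => ?_⟩
  have hpoint : (q + q ^ 2) • p + (1 + q) • ∑ i, ∑ j, p (i, j) • (Pi.single (i, j) 1 : ι × κ → ℝ) +
      (x - (1 + q) ^ 2) • p = x • p := by
    rw [sum_sum_smul_single, ← add_smul, ← add_smul]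
    congr 1
    ring
  rw [← ofReal_eval_smul_sub_sum_single hF hsum, Complex.ofReal_ne_zero, ← hpoint]
  exact (hc (x - (1 + q) ^ 2) (sub_nonneg.2 hx)).ne'

theorem pos_of_sum_smul_vecMulVec_eq_one [Nonempty N] {ε : ℝ}
    (hsum : ∑ s, p s • vecMulVec (a s) (star (a s)) = 1)
    (hnorm : ∀ i, ∑ j, p (i, j) * ∑ k, ‖a (i, j) k‖ ^ 2 ≤ ε) : 0 < ε := by
  have htrace : ∑ s, p s * ∑ k, ‖a s k‖ ^ 2 = Fintype.card N := by
    have := congrArg trace hsum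
    simp only [trace_sum, trace_smul, trace_vecMulVec, dotProduct_comm _ (star _),
      star_dotProduct_self, trace_one, Complex.real_smul] at this
    exact_mod_cast this
  by_contra! hε
  have hle : ∑ s, p s * ∑ k, ‖a s k‖ ^ 2 ≤ 0 := by
    rw [Fintype.sum_prod_type]
    exact Finset.sum_nonpos fun i _ => (hnorm i).trans hε
  rw [htrace] at hle
  exact hle.not_gt (Nat.cast_pos.2 Fintype.card_pos)

theorem exists_posSemidef_sub_sum_vecMulVec {ε : ℝ} (hp : ∀ s, 0 < p s)
    (hpsum : ∀ i, ∑ j, p (i, j) = 1) (hsum : ∑ s, p s • vecMulVec (a s) (star (a s)) = 1)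
    (hnorm : ∀ i, ∑ j, p (i, j) * ∑ k, ‖a (i, j) k‖ ^ 2 ≤ ε) :
    ∃ c : ι → κ,
      ((1 + √ε) ^ 2 • 1 - ∑ i, vecMulVec (a (i, c i)) (star (a (i, c i)))).PosSemidef := by
  rcases isEmpty_or_nonempty N with hN | hN
  · have hκ (i : ι) : Nonempty κ := by
      by_contra! h
      simpa using hpsum i
    exact ⟨fun i => (hκ i).some, by rw [Subsingleton.elim (_ - _) 0]; exact .zero⟩
  have hε := pos_of_sum_smul_vecMulVec_eq_one hsum hnorm
  obtain ⟨c, hc⟩ := exists_forall_det_sub_sum_ne_zero (Real.sqrt_pos.2 hε) hp hpsum hsum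
    (by rwa [Real.sq_sqrt hε.le])
  refine ⟨c, posSemidef_smul_one_sub_of_det_ne_zero ?_ hc⟩
  exact (posSemidef_sum _ fun i _ => posSemidef_vecMulVec_self_star (a (i, c i))).isHermitian

end MarcusSpielmanSrivastava

section Partition

open Matrix
open scoped ComplexOrder

variable {ι κ N : Type*} [DecidableEq κ]

/-- The vector `v` placed in the `j`-th of `κ` orthogonal copies of `ℂ^N`. Splitting the vectors of
a family among the parts of a partition amounts to choosing such a copy for each of them. -/
def blockVector (j : κ) (v : N → ℂ) : N × κ → ℂ :=
  fun k => if k.2 = j then v k.1 else 0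

theorem blockDiag_vecMulVec_blockVector (j : κ) (v : N → ℂ) :
    blockDiag (vecMulVec (blockVector j v) (star (blockVector j v))) =
      Pi.single j (vecMulVec v (star v)) := by
  ext l k k'
  rcases eq_or_ne l j with rfl | h
  · simp [blockVector, vecMulVec_apply, blockDiag_apply]
  · simp [blockVector, vecMulVec_apply, blockDiag_apply, h]

theorem sum_norm_sq_blockVector [Fintype N] [Fintype κ] (j : κ) (v : N → ℂ) :
    ∑ k, ‖blockVector j v k‖ ^ 2 = ∑ k, ‖v k‖ ^ 2 := by
  simp [blockVector, Fintype.sum_prod_type, apply_ite]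

theorem sum_vecMulVec_blockVector [Fintype κ] (v : N → ℂ) :
    ∑ j : κ, vecMulVec (blockVector j v) (star (blockVector j v)) =
      blockDiagonal fun _ => vecMulVec v (star v) := by
  ext ⟨k, l⟩ ⟨k', l'⟩
  rcases eq_or_ne l l' with rfl | h
  · simp [blockVector, Matrix.sum_apply, vecMulVec_apply, blockDiagonal_apply]
  · simp [blockVector, Matrix.sum_apply, vecMulVec_apply, blockDiagonal_apply, h,
      h.symm]

theorem vecMulVec_inv_sqrt_smul {x : ℝ} (hx : 0 ≤ x) (v : N → ℂ) :
    vecMulVec ((√x)⁻¹ • v) (star ((√x)⁻¹ • v)) = x⁻¹ • vecMulVec v (star v) := by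
  rw [star_smul, star_trivial, smul_vecMulVec, vecMulVec_smul, smul_smul, ← mul_inv,
    Real.mul_self_sqrt hx]

variable [Fintype ι] {u : ι → N → ℂ}

theorem blockDiag_sum_smul_vecMulVec_blockVector (c : ι → κ) (x : κ → ℝ) (j : κ) :
    blockDiag (∑ i, x (c i) •
      vecMulVec (blockVector (c i) (u i)) (star (blockVector (c i) (u i)))) j =
      x j • ∑ i with c i = j, vecMulVec (u i) (star (u i)) := by
  have hmap := congrFun (map_sum (blockDiagAddMonoidHom N N κ ℂ) (fun i => x (c i) •
    vecMulVec (blockVector (c i) (u i)) (star (blockVector (c i) (u i)))) Finset.univ) j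
  refine hmap.trans ?_
  rw [Finset.sum_apply, Finset.smul_sum, Finset.sum_filter]
  refine Finset.sum_congr rfl fun i _ => ?_
  rw [blockDiagAddMonoidHom_apply, blockDiag_smul, blockDiag_vecMulVec_blockVector, Pi.smul_apply]
  rcases eq_or_ne (c i) j with rfl | h
  · simp
  · simp [h, h.symm]

variable [Fintype κ] [DecidableEq N]

theorem sum_sum_vecMulVec_blockVector (hsum : ∑ i, vecMulVec (u i) (star (u i)) = 1) :
    ∑ i, ∑ j : κ, vecMulVec (blockVector j (u i)) (star (blockVector j (u i))) = 1 := by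
  have hmap := map_sum (blockDiagonalAddMonoidHom N N κ ℂ)
    (fun i _ => vecMulVec (u i) (star (u i))) Finset.univ
  simp only [sum_vecMulVec_blockVector]
  rw [← blockDiagonal_one, Pi.one_def, ← hsum, ← Finset.sum_fn]
  exact hmap.symm

variable [Fintype N] {t : κ → ℝ} {ε : ℝ}

theorem exists_forall_posSemidef_sub_sum_filter (hsum : ∑ i, vecMulVec (u i) (star (u i)) = 1)
    (hnorm : ∀ i, ∑ k, ‖u i k‖ ^ 2 ≤ ε) (ht : ∀ j, 0 < t j) (htsum : ∑ j, t j = 1) :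
    ∃ c : ι → κ, ∀ j, ((t j * (1 + √(Fintype.card κ * ε)) ^ 2) • 1 -
      ∑ i with c i = j, vecMulVec (u i) (star (u i))).PosSemidef := by
  let a : ι × κ → N × κ → ℂ := fun s => (√(t s.2))⁻¹ • blockVector s.2 (u s.1)
  have ha (s : ι × κ) : vecMulVec (a s) (star (a s)) =
      (t s.2)⁻¹ • vecMulVec (blockVector s.2 (u s.1)) (star (blockVector s.2 (u s.1))) :=
    vecMulVec_inv_sqrt_smul (ht _).le _
  have hasum : ∑ s, t s.2 • vecMulVec (a s) (star (a s)) = 1 := by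
    simp only [ha, smul_inv_smul₀ (ht _).ne', Fintype.sum_prod_type,
      sum_sum_vecMulVec_blockVector hsum]
  have hanorm (i : ι) : ∑ j, t j * ∑ k, ‖a (i, j) k‖ ^ 2 ≤ Fintype.card κ * ε := by
    have hterm (j : κ) : t j * ∑ k, ‖a (i, j) k‖ ^ 2 = ∑ k, ‖u i k‖ ^ 2 := by
      simp only [a, Pi.smul_apply, norm_smul, mul_pow, ← Finset.mul_sum, sum_norm_sq_blockVector]
      simp [Real.sq_sqrt (ht _).le, (ht _).ne']
    simp only [hterm, Finset.sum_const, Finset.card_univ, nsmul_eq_mul]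
    gcongr
    exact hnorm i
  obtain ⟨c, hc⟩ := exists_posSemidef_sub_sum_vecMulVec (fun s => ht s.2) (fun _ => htsum)
    hasum hanorm
  refine ⟨c, fun j => ?_⟩
  have hblock : t j • blockDiag ((1 + √(Fintype.card κ * ε)) ^ 2 • 1 -
      ∑ i, vecMulVec (a (i, c i)) (star (a (i, c i)))) j =
      (t j * (1 + √(Fintype.card κ * ε)) ^ 2) • 1 -
        ∑ i with c i = j, vecMulVec (u i) (star (u i)) := by
    simp only [ha]
    rw [blockDiag_sub, Pi.sub_apply, blockDiag_smul, blockDiag_one, Pi.smul_apply, Pi.one_apply,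
      blockDiag_sum_smul_vecMulVec_blockVector c fun l => (t l)⁻¹, smul_sub, smul_smul,
      smul_inv_smul₀ (ht j).ne']
  exact hblock ▸ (hc.submatrix (·, j)).smul (ht j).le

end Partition

section OperatorNorm

open Matrix
open scoped ComplexOrder Matrix.Norms.L2Operator MatrixOrder

theorem outer_eq_vecMulVec {d : ℕ} (u : EuclideanSpace ℂ (Fin d)) :
    outer u = vecMulVec u.ofLp (star u.ofLp) := by
  ext i j
  simp [outer, vecMulVec_apply]

theorem opNorm_le_of_posSemidef {d : ℕ} {A : Matrix (Fin d) (Fin d) ℂ} {B : ℝ} (hB : 0 ≤ B)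
    (hA : A.PosSemidef) (hAB : (B • 1 - A).PosSemidef) : opNorm A ≤ B := by
  let _ : CStarAlgebra (Matrix (Fin d) (Fin d) ℂ) := {}
  rw [opNorm, ← cstar_norm_def, CStarAlgebra.norm_le_iff_le_algebraMap A hB hA.nonneg, le_iff,
    Algebra.algebraMap_eq_smul_one]
  exact hAB

theorem opNorm_sum_outer_le {ι : Type*} {d : ℕ} {s : Finset ι} {u : ι → EuclideanSpace ℂ (Fin d)}
    {B : ℝ} (hB : 0 ≤ B)
    (h : (B • 1 - ∑ i ∈ s, vecMulVec (u i).ofLp (star (u i).ofLp)).PosSemidef) :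
    opNorm (∑ i ∈ s, outer (u i)) ≤ B := by
  simp only [outer_eq_vecMulVec]
  exact opNorm_le_of_posSemidef hB
    (posSemidef_sum _ fun i _ => posSemidef_vecMulVec_self_star (u i).ofLp) h

end OperatorNorm

/-- If `∑ uᵢuᵢ* = I`, `‖uᵢ‖² ≤ ε` for all `i`, and `t₁, …, t_r > 0` sum to `1`, then
`{1, …, m}` can be partitioned into `r` sets `S₁, …, S_r` with
`‖∑_{i ∈ S_j} uᵢuᵢ*‖ ≤ t_j (1 + √(rε))²` for each `j`. -/
theorem stmt1 {d m : ℕ} (ε : ℝ) (u : Fin m → EuclideanSpace ℂ (Fin d))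
    (hsum : ∑ i, outer (u i) = 1)
    (hnorm : ∀ i, ‖u i‖ ^ 2 ≤ ε)
    (r : ℕ) (t : Fin r → ℝ) (ht : ∀ j, 0 < t j) (htsum : ∑ j, t j = 1) :
    ∃ S : Fin r → Finset (Fin m),
      (∀ i : Fin m, ∃! j : Fin r, i ∈ S j) ∧
      ∀ j, opNorm (∑ i ∈ S j, outer (u i)) ≤ t j * (1 + Real.sqrt (r * ε)) ^ 2 := by
  simp only [EuclideanSpace.norm_sq_eq] at hnorm
  simp only [outer_eq_vecMulVec] at hsum
  obtain ⟨c, hc⟩ := exists_forall_posSemidef_sub_sum_filter hsum hnorm ht htsum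
  rw [Fintype.card_fin] at hc
  refine ⟨fun j => {i | c i = j}, fun i => by simp, fun j => ?_⟩
  exact opNorm_sum_outer_le (mul_nonneg (ht j).le (sq_nonneg _)) (hc j)
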